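/- arXiv:1805.02559 — 3 statements merged into one kernel-verified Lean document; each statement's English description precedes it below -/
import Mathlib

section
/- Let n ≥ 1 be an integer. In G = (ℤ/nℤ)² set g₀ = (1, 0), g₁ = (−1, −1), g_∞ = (0, 1) and h₀ = (1, 2), h₁ = (1, −1), h_∞ = (−2, −1). Then for all p ≠ q in {0, 1, ∞}, the intersection of the cyclic subgroup generated by g_p with the cyclic subgroup generated by h_q is the trivial subgroup {(0, 0)}. -/
/-! For `p ≠ q` the determinant of `(g_p, h_q)` is always `-1`, a unit in every commutative ring.
The functional `det (·, h_q)` kills `h_q` and takes a regular value at `g_p`, so the lines spanned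
by `g_p` and `h_q` meet only in `0`. -/

theorem disjoint_span_singleton_of_le_ker {R M : Type*} [Semiring R] [AddCommMonoid M] [Module R M]
    {f : M →ₗ[R] R} {v : M} {N : Submodule R M} (hv : IsRightRegular (f v))
    (hN : N ≤ LinearMap.ker f) : Disjoint (Submodule.span R {v}) N := by
  rw [Submodule.disjoint_def]
  intro x hxv hxN
  obtain ⟨c, rfl⟩ := Submodule.mem_span_singleton.mp hxv
  have hc : c * f v = 0 := by simpa using hN hxN
  rw [hv.mul_right_eq_zero_iff.mp hc, zero_smul]

theorem disjoint_span_singleton_of_isRegular_det {R : Type*} [CommRing R] {v w : R × R}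
    (hdet : IsRegular !![v.1, v.2; w.1, w.2].det) :
    Disjoint (Submodule.span R {v}) (Submodule.span R {w}) := by
  let detWith : R × R →ₗ[R] R := w.2 • LinearMap.fst R R R - w.1 • LinearMap.snd R R R
  have detWith_left : detWith v = !![v.1, v.2; w.1, w.2].det := by
    simp only [detWith, LinearMap.sub_apply, LinearMap.smul_apply, LinearMap.fst_apply,
      LinearMap.snd_apply, smul_eq_mul, Matrix.det_fin_two_of]
    ring
  have detWith_self : detWith w = 0 := by
    simp [detWith, mul_comm]
  refine disjoint_span_singleton_of_le_ker (f := detWith) ?_ ?_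
  · exact detWith_left ▸ hdet.right
  · rwa [Submodule.span_singleton_le_iff_mem, LinearMap.mem_ker]

theorem disjoint_zmultiples_of_disjoint_span_singleton {R M : Type*} [Ring R] [AddCommGroup M]
    [Module R M] {v w : M} (hvw : Disjoint (Submodule.span R {v}) (Submodule.span R {w})) :
    Disjoint (AddSubgroup.zmultiples v) (AddSubgroup.zmultiples w) := by
  have zmultiples_le_span (u : M) :
      AddSubgroup.zmultiples u ≤ (Submodule.span R {u}).toAddSubgroup :=
    AddSubgroup.zmultiples_le_of_mem (Submodule.mem_span_singleton_self u)
  rw [AddSubgroup.disjoint_def]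
  intro x hxv hxw
  exact Submodule.disjoint_def.mp hvw x (zmultiples_le_span v hxv) (zmultiples_le_span w hxw)

theorem stmt_2_general {R : Type*} [CommRing R] (g h : Fin 3 → R × R)
    (hg : g = ![(1, 0), (-1, -1), (0, 1)])
    (hh : h = ![(1, 2), (1, -1), (-2, -1)]) {p q : Fin 3} (hpq : p ≠ q) :
    Disjoint (Submodule.span R {g p}) (Submodule.span R {h q}) := by
  have det_eq_neg_one : !![(g p).1, (g p).2; (h q).1, (h q).2].det = -1 := by
    subst hg hh
    rw [Matrix.det_fin_two_of]
    fin_cases p <;> fin_cases q <;> first | exact absurd rfl hpq | norm_num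
  apply disjoint_span_singleton_of_isRegular_det
  rw [det_eq_neg_one]
  exact isUnit_neg_one.isRegular

/-- In `G = (ℤ/nℤ)²` with `g₀ = (1,0)`, `g₁ = (-1,-1)`, `g_∞ = (0,1)`
and `h₀ = (1,2)`, `h₁ = (1,-1)`, `h_∞ = (-2,-1)` (indexed by `0, 1, 2` for the
branch points `0, 1, ∞`), for all `p ≠ q` the intersection `⟨g_p⟩ ⊓ ⟨h_q⟩` is trivial. -/
theorem stmt_2 (n : ℕ) (hn : 1 ≤ n)
    (g h : Fin 3 → ZMod n × ZMod n)
    (hg : g = ![(1, 0), (-1, -1), (0, 1)])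
    (hh : h = ![(1, 2), (1, -1), (-2, -1)]) :
    ∀ p q : Fin 3, p ≠ q →
      AddSubgroup.zmultiples (g p) ⊓ AddSubgroup.zmultiples (h q) = ⊥ := by
  intro p q hpq
  exact (disjoint_zmultiples_of_disjoint_span_singleton (stmt_2_general g h hg hh hpq)).eq_bot
end

section
/- Let n ≥ 2 be an even integer and G = (ℤ/nℤ)². Set g₀ = (1, 0), g₁ = (−1, −1), g_∞ = (0, 1) and h₀ = (1, 2), h₁ = (1, −1), h_∞ = (−2, −1). For each p ∈ {0, 1, ∞}, consider the diagonal action of G on the product of coset spaces (G / ⟨g_p⟩) × (G / ⟨h_p⟩). This action has exactly two orbits, and the stabilizer of every point has order exactly 2. -/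
/-!
For subgroups `A`, `B` of an abelian group `G`, the map `(x, y) ↦ x - y` identifies the orbits of
`G` on `G ⧸ A × G ⧸ B` with `G ⧸ (A ⊔ B)`, and every stabilizer is `A ⊓ B`. If `[G : A] = |B|`, then
`|A ⊓ B| = [G : A ⊔ B]`, so the two counts agree.

For `G = (ℤ/nℤ)²`, `A = ⟨u⟩` and `B = ⟨v⟩` with `u`, `v` unimodular, the determinant `det(u, ·)` is
onto `ℤ/nℤ` with kernel `⟨u⟩`. Hence `[G : ⟨u⟩] = |⟨v⟩| = n`, and `⟨u⟩ ⊔ ⟨v⟩` is the preimage of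
`⟨det(u, v)⟩`, a subgroup of index `gcd(n, det(u, v))`. All three pairs have `det(g_p, h_p) = 2`.
-/

open AddSubgroup

section Diagonal

variable {G : Type*} [AddCommGroup G] (A B : AddSubgroup G)

/-- The homomorphism `(x, y) ↦ x - y` from `G ⧸ A × G ⧸ B` to `G ⧸ (A ⊔ B)`, the complete invariant
of the orbits of the diagonal action of `G`. -/
def quotientProdSub : (G ⧸ A) × (G ⧸ B) →+ G ⧸ (A ⊔ B) :=
  (QuotientAddGroup.map A (A ⊔ B) (.id G) le_sup_left).comp (.fst _ _) -
    (QuotientAddGroup.map B (A ⊔ B) (.id G) le_sup_right).comp (.snd _ _)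

theorem quotientProdSub_mk (a b : G) :
    quotientProdSub A B ((a : G ⧸ A), (b : G ⧸ B)) = ((a - b : G) : G ⧸ (A ⊔ B)) :=
  rfl

theorem quotientProdSub_surjective : Function.Surjective (quotientProdSub A B) := fun z ↦ by
  obtain ⟨c, rfl⟩ := QuotientAddGroup.mk_surjective z
  exact ⟨((c : G ⧸ A), ((0 : G) : G ⧸ B)), by rw [quotientProdSub_mk, sub_zero]⟩

theorem quotientProdSub_vadd (c : G) (x : (G ⧸ A) × (G ⧸ B)) :
    quotientProdSub A B (c +ᵥ x) = quotientProdSub A B x := by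
  obtain ⟨x, y⟩ := x
  obtain ⟨a, rfl⟩ := QuotientAddGroup.mk_surjective x
  obtain ⟨b, rfl⟩ := QuotientAddGroup.mk_surjective y
  exact congrArg (QuotientAddGroup.mk (s := A ⊔ B)) (add_sub_add_left_eq_sub a b c)

theorem quotientProdSub_eq_zero_iff {x : (G ⧸ A) × (G ⧸ B)} :
    quotientProdSub A B x = 0 ↔ ∃ c : G, x = (↑c, ↑c) := by
  constructor
  · obtain ⟨x, y⟩ := x
    obtain ⟨a, rfl⟩ := QuotientAddGroup.mk_surjective x
    obtain ⟨b, rfl⟩ := QuotientAddGroup.mk_surjective y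
    rw [quotientProdSub_mk, QuotientAddGroup.eq_zero_iff, mem_sup]
    rintro ⟨s, hs, t, ht, hst⟩
    refine ⟨b + t, Prod.ext (QuotientAddGroup.eq_iff_sub_mem.2 ?_)
      (QuotientAddGroup.eq.2 (by simpa using ht))⟩
    rwa [← sub_sub, ← hst, add_sub_cancel_right]
  · rintro ⟨c, rfl⟩
    rw [quotientProdSub_mk, sub_self, QuotientAddGroup.mk_zero]

theorem orbitRel_quotient_prod_iff {x y : (G ⧸ A) × (G ⧸ B)} :
    AddAction.orbitRel G _ x y ↔ quotientProdSub A B x = quotientProdSub A B y := by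
  rw [AddAction.orbitRel_apply, AddAction.mem_orbit_iff]
  constructor
  · rintro ⟨c, rfl⟩
    exact quotientProdSub_vadd A B c y
  · intro h
    obtain ⟨c, hc⟩ := (quotientProdSub_eq_zero_iff A B).1 (by rw [map_sub, sub_eq_zero.2 h])
    exact ⟨c, (sub_eq_iff_eq_add.1 hc).symm⟩

theorem card_orbitRel_quotient_prod :
    Nat.card (AddAction.orbitRel.Quotient G ((G ⧸ A) × (G ⧸ B))) = (A ⊔ B).index :=
  Nat.card_congr <| (Quotient.congrRight fun _ _ ↦ orbitRel_quotient_prod_iff A B).trans <|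
    Setoid.quotientKerEquivOfSurjective _ (quotientProdSub_surjective A B)

theorem stabilizer_quotient_prod (x : (G ⧸ A) × (G ⧸ B)) :
    AddAction.stabilizer G x = A ⊓ B := by
  obtain ⟨x, y⟩ := x
  obtain ⟨a, rfl⟩ := QuotientAddGroup.mk_surjective x
  obtain ⟨b, rfl⟩ := QuotientAddGroup.mk_surjective y
  ext c
  rw [AddAction.mem_stabilizer_iff, Prod.ext_iff, mem_inf]
  change ((c + a : G) : G ⧸ A) = a ∧ ((c + b : G) : G ⧸ B) = b ↔ _
  simp only [QuotientAddGroup.eq_iff_sub_mem, add_sub_cancel_right]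

end Diagonal

theorem card_inf_eq_index_sup_of_index_eq_card {G : Type*} [AddGroup G]
    (A B : AddSubgroup G) [A.Normal] [Finite B] (h : A.index = Nat.card B) :
    Nat.card ↥(A ⊓ B) = (A ⊔ B).index := by
  have card_inf_mul : Nat.card ↥(A ⊓ B) * A.relIndex B = Nat.card B := by
    rw [← inf_relIndex_right, ← relIndex_bot_left, relIndex_mul_relIndex _ _ _ bot_le inf_le_right,
      relIndex_bot_left]
  have index_sup_mul : (A ⊔ B).index * A.relIndex B = Nat.card B := by
    rw [← relIndex_sup_left, mul_comm, relIndex_mul_index le_sup_left, h]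
  exact Nat.eq_of_mul_eq_mul_right
    (Nat.pos_of_mul_pos_left (card_inf_mul ▸ Nat.card_pos)) (card_inf_mul.trans index_sup_mul.symm)

section Wedge

variable {R : Type*} [CommRing R]

/-- The determinant `det(u, ·)` of a pair of vectors of `R²`, as a linear form in the second. -/
def wedge (u : R × R) : R × R →ₗ[R] R :=
  u.1 • LinearMap.snd R R R - u.2 • LinearMap.fst R R R

theorem wedge_apply (u v : R × R) : wedge u v = u.1 * v.2 - u.2 * v.1 :=
  rfl

theorem wedge_surjective {u : R × R} (hu : IsCoprime u.1 u.2) :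
    Function.Surjective (wedge u) := fun r ↦ by
  obtain ⟨a, b, hab⟩ := hu
  exact ⟨(-b * r, a * r), by rw [wedge_apply]; linear_combination r * hab⟩

theorem ker_wedge {u : R × R} (hu : IsCoprime u.1 u.2) : LinearMap.ker (wedge u) = R ∙ u := by
  obtain ⟨a, b, hab⟩ := hu
  ext v
  rw [LinearMap.mem_ker, Submodule.mem_span_singleton, wedge_apply]
  constructor
  · intro hv
    refine ⟨a * v.1 + b * v.2, Prod.ext ?_ ?_⟩ <;>
      simp only [Prod.smul_fst, Prod.smul_snd, smul_eq_mul]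
    · linear_combination v.1 * hab + b * hv
    · linear_combination v.2 * hab - a * hv
  · rintro ⟨k, rfl⟩
    simp only [Prod.smul_fst, Prod.smul_snd, smul_eq_mul]
    ring

end Wedge

theorem span_zmod_singleton_toAddSubgroup {n : ℕ} {M : Type*} [AddCommGroup M] [Module (ZMod n) M]
    (u : M) : (ZMod n ∙ u).toAddSubgroup = zmultiples u := by
  ext v
  rw [Submodule.mem_toAddSubgroup, Submodule.mem_span_singleton, mem_zmultiples_iff,
    ZMod.intCast_surjective.exists]
  simp only [Int.cast_smul_eq_zsmul]

theorem index_zmultiples_natCast_zmod (n d : ℕ) [NeZero n] :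
    (zmultiples (d : ZMod n)).index = n.gcd d := by
  have range_eq : (nsmulAddMonoidHom d : ZMod n →+ ZMod n).range = zmultiples (d : ZMod n) := by
    ext x
    simp [mem_zmultiples_iff, ZMod.intCast_surjective.exists, mul_comm]
  rw [← range_eq, IsAddCyclic.index_nsmulAddMonoidHom_range, Nat.card_zmod]

section ZModSq

variable {n : ℕ} {u v : ZMod n × ZMod n}

theorem ker_wedge_toAddMonoidHom (hu : IsCoprime u.1 u.2) :
    (wedge u).toAddMonoidHom.ker = zmultiples u := by
  rw [← span_zmod_singleton_toAddSubgroup (n := n), ← ker_wedge hu]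
  rfl

theorem index_zmultiples_of_isCoprime (hu : IsCoprime u.1 u.2) : (zmultiples u).index = n := by
  rw [← ker_wedge_toAddMonoidHom hu, index_ker,
    AddMonoidHom.range_eq_top.2 (wedge_surjective hu), card_top, Nat.card_zmod]

theorem card_zmultiples_of_isCoprime [NeZero n] (hu : IsCoprime u.1 u.2) :
    Nat.card (zmultiples u) = n := by
  have h := (zmultiples u).card_mul_index
  rw [index_zmultiples_of_isCoprime hu, Nat.card_prod, Nat.card_zmod] at h
  exact Nat.eq_of_mul_eq_mul_right (NeZero.pos n) h

theorem index_zmultiples_sup_zmultiples [NeZero n] (hu : IsCoprime u.1 u.2) {d : ℕ}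
    (hd : wedge u v = d) : (zmultiples u ⊔ zmultiples v).index = n.gcd d := by
  rw [sup_comm, ← ker_wedge_toAddMonoidHom hu, ← comap_map_eq, AddMonoidHom.map_zmultiples,
    index_comap_of_surjective _ (wedge_surjective hu), ← index_zmultiples_natCast_zmod, ← hd]
  rfl

theorem card_zmultiples_inf_zmultiples [NeZero n] (hu : IsCoprime u.1 u.2)
    (hv : IsCoprime v.1 v.2) {d : ℕ} (hd : wedge u v = d) :
    Nat.card ↥(zmultiples u ⊓ zmultiples v) = n.gcd d := by
  rw [card_inf_eq_index_sup_of_index_eq_card, index_zmultiples_sup_zmultiples hu hd]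
  rw [index_zmultiples_of_isCoprime hu, card_zmultiples_of_isCoprime hv]

end ZModSq

/-- For even `n ≥ 2` and `G = (ℤ/nℤ)²` with `g₀ = (1,0)`, `g₁ = (-1,-1)`,
`g_∞ = (0,1)` and `h₀ = (1,2)`, `h₁ = (1,-1)`, `h_∞ = (-2,-1)` (indexed by `0, 1, 2`
for the branch points `0, 1, ∞`), the diagonal `G`-action on
`(G ⧸ ⟨g_p⟩) × (G ⧸ ⟨h_p⟩)` has exactly two orbits, and every point has
stabilizer of order exactly `2`. -/
theorem stmt_7 (n : ℕ) (hn : 2 ≤ n) (heven : Even n)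
    (g h : Fin 3 → ZMod n × ZMod n)
    (hg : g = ![(1, 0), (-1, -1), (0, 1)])
    (hh : h = ![(1, 2), (1, -1), (-2, -1)]) :
    ∀ p : Fin 3,
      Nat.card (AddAction.orbitRel.Quotient (ZMod n × ZMod n)
        (((ZMod n × ZMod n) ⧸ AddSubgroup.zmultiples (g p)) ×
          ((ZMod n × ZMod n) ⧸ AddSubgroup.zmultiples (h p)))) = 2 ∧
      ∀ x : ((ZMod n × ZMod n) ⧸ AddSubgroup.zmultiples (g p)) ×
            ((ZMod n × ZMod n) ⧸ AddSubgroup.zmultiples (h p)),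
        Nat.card (AddAction.stabilizer (ZMod n × ZMod n) x) = 2 := by
  intro p
  have : NeZero n := ⟨by lia⟩
  have hgp : IsCoprime (g p).1 (g p).2 := by
    fin_cases p <;> simp [hg, isCoprime_one_left, isCoprime_one_right, IsCoprime.neg_left_iff]
  have hhp : IsCoprime (h p).1 (h p).2 := by
    fin_cases p <;> simp [hh, isCoprime_one_left, isCoprime_one_right, IsCoprime.neg_right_iff]
  have det_eq_two : wedge (g p) (h p) = (2 : ℕ) := by
    fin_cases p <;> simp [hg, hh, wedge_apply, one_add_one_eq_two]
  have gcd_eq_two : n.gcd 2 = 2 := Nat.gcd_eq_right heven.two_dvd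
  refine ⟨?_, fun x ↦ ?_⟩
  · rw [card_orbitRel_quotient_prod, index_zmultiples_sup_zmultiples hgp det_eq_two, gcd_eq_two]
  · rw [stabilizer_quotient_prod, card_zmultiples_inf_zmultiples hgp hhp det_eq_two, gcd_eq_two]
end

section
/- Let n ≥ 8 be an integer with 3 ∤ n, and let ᵗA be the matrix over ℤ/nℤ with rows (1, 2), (−2, −1). Then for every (α, β) in the set {(2,1), (4,1), (1,3), (3,1), (1,2), (1,4)} and every (α', β') in the set {0,1}² ∪ {(0, n−1), (n−1, 0), (1, n−1), (n−1, 1), (1, n−2), (n−2, 1)}, one has (−α, −β) ≠ ᵗA·(α', β') in (ℤ/nℤ)². Equivalently, since ᵗA is invertible over ℤ/nℤ, ᵗA⁻¹·(−α, −β) is never congruent modulo n to any (α', β') in the latter set. -/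
/-!
Lift both families of characters to small integer vectors `c` and `d`. In a ring of
characteristic `n`, the equation `-c = ᵗA d` says that `n` divides both entries of `c + ᵗA d`, that
is, their greatest common divisor. Over the sixty pairs this gcd takes exactly the values `1, …, 6`,
so a coincidence occurs precisely in the characteristics `1, …, 6`.
-/

open scoped Matrix

/-- The transpose `ᵗA` of the integer matrix `A = ((1, -2), (2, -1))` defining the twisted action. -/
def twistTranspose : Matrix (Fin 2) (Fin 2) ℤ := !![1, 2; -2, -1]

/-- Integer lifts of the six characters `χ₀, χ₀', χ₁, χ₁', χ_∞, χ_∞'`, in this order. -/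
def chosenCharacters : Finset (ℤ × ℤ) :=
  {(2, 1), (4, 1), (1, 3), (3, 1), (1, 2), (1, 4)}

/-- Integer lifts of the ten characters without a nonzero bicanonical eigensection. The residues
`n - 1` and `n - 2` are lifted to `-1` and `-2`, which makes the lifts independent of `n`. -/
def excludedCharacters : Finset (ℤ × ℤ) :=
  {(0, 0), (0, 1), (1, 0), (1, 1), (0, -1), (-1, 0), (1, -1), (-1, 1), (1, -2), (-2, 1)}

/-- The gcd of the two entries of `c + M d`: the largest modulus for which `-c ≡ M d`, with value
`0` when `-c = M d` already holds over `ℤ`. -/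
def coincidenceModulus (M : Matrix (Fin 2) (Fin 2) ℤ) (c d : ℤ × ℤ) : ℕ :=
  Int.gcd (c.1 + (M 0 0 * d.1 + M 0 1 * d.2)) (c.2 + (M 1 0 * d.1 + M 1 1 * d.2))

theorem image₂_coincidenceModulus_twistTranspose :
    Finset.image₂ (coincidenceModulus twistTranspose) chosenCharacters excludedCharacters =
      Finset.Icc 1 6 := by
  decide

theorem forall_mem_Icc_one_not_dvd_iff {n k : ℕ} :
    (∀ m ∈ Finset.Icc 1 k, ¬ n ∣ m) ↔ n = 0 ∨ k < n := by
  constructor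
  · intro h
    by_contra! hn
    exact h n (Finset.mem_Icc.2 ⟨Nat.one_le_iff_ne_zero.2 hn.1, hn.2⟩) dvd_rfl
  · intro hn m hm hnm
    obtain ⟨hm_pos, hmk⟩ := Finset.mem_Icc.1 hm
    have hn_pos : 0 < n := Nat.pos_of_dvd_of_pos hnm hm_pos
    have hn_le : n ≤ m := Nat.le_of_dvd hm_pos hnm
    omega

section Ring

variable (R : Type*) [Ring R]

theorem neg_eq_mulVec_iff_dvd_coincidenceModulus (n : ℕ) [CharP R n]
    (M : Matrix (Fin 2) (Fin 2) ℤ) (c d : ℤ × ℤ) :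
    ![-(c.1 : R), -(c.2 : R)] = M.map Int.cast *ᵥ ![(d.1 : R), (d.2 : R)] ↔
      n ∣ coincidenceModulus M c d := by
  rw [coincidenceModulus, ← Int.natCast_dvd_natCast, Int.dvd_coe_gcd_iff,
    ← CharP.intCast_eq_zero_iff R n, ← CharP.intCast_eq_zero_iff R n]
  simp [funext_iff, Fin.forall_fin_two, neg_eq_iff_add_eq_zero]

theorem twistTranspose_map_intCast :
    twistTranspose.map (Int.cast : ℤ → R) = !![1, 2; -2, -1] := by
  ext i j
  fin_cases i <;> fin_cases j <;> simp [twistTranspose]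

theorem image_intCast_chosenCharacters :
    Prod.map (Int.cast : ℤ → R) (Int.cast : ℤ → R) '' chosenCharacters =
      {(2, 1), (4, 1), (1, 3), (3, 1), (1, 2), (1, 4)} := by
  simp [chosenCharacters, Set.image_insert_eq]

theorem image_intCast_excludedCharacters (n : ℕ) [CharP R n] :
    Prod.map (Int.cast : ℤ → R) (Int.cast : ℤ → R) '' excludedCharacters =
      {(0, 0), (0, 1), (1, 0), (1, 1),
        (0, (n : R) - 1), ((n : R) - 1, 0), (1, (n : R) - 1), ((n : R) - 1, 1),
        (1, (n : R) - 2), ((n : R) - 2, 1)} := by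
  simp [excludedCharacters, Set.image_insert_eq]

theorem stmt_15_general (n : ℕ) [CharP R n] :
    (∀ v ∈ ({(2, 1), (4, 1), (1, 3), (3, 1), (1, 2), (1, 4)} : Set (R × R)),
      ∀ w ∈ ({(0, 0), (0, 1), (1, 0), (1, 1),
          (0, (n : R) - 1), ((n : R) - 1, 0), (1, (n : R) - 1), ((n : R) - 1, 1),
          (1, (n : R) - 2), ((n : R) - 2, 1)} : Set (R × R)),
        ![-v.1, -v.2] ≠ !![1, 2; -2, -1] *ᵥ ![w.1, w.2]) ↔
      n = 0 ∨ 6 < n := by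
  rw [← image_intCast_chosenCharacters, ← image_intCast_excludedCharacters,
    ← twistTranspose_map_intCast, ← forall_mem_Icc_one_not_dvd_iff,
    ← image₂_coincidenceModulus_twistTranspose, Finset.forall_mem_image₂]
  simp only [Set.forall_mem_image, SetLike.mem_coe, Prod.map_fst, Prod.map_snd, ne_eq,
    neg_eq_mulVec_iff_dvd_coincidenceModulus R n]

end Ring

/-- For `n ≥ 8` with `3 ∤ n` and `ᵗA = ((1, 2), (-2, -1))` over `ℤ/nℤ`,
for every `(α, β)` among the six chosen characters and every `(α', β')` among the ten
exceptional pairs, one has `(-α, -β) ≠ ᵗA · (α', β')` in `(ℤ/nℤ)²`. -/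
theorem stmt_15 (n : ℕ) (hn : 8 ≤ n) (h3 : ¬ (3 ∣ n))
    (tA : Matrix (Fin 2) (Fin 2) (ZMod n))
    (htA : tA = !![1, 2; -2, -1]) :
    ∀ v ∈ ({(2, 1), (4, 1), (1, 3), (3, 1), (1, 2), (1, 4)} : Set (ZMod n × ZMod n)),
    ∀ w ∈ ({(0, 0), (0, 1), (1, 0), (1, 1),
        (0, (n : ZMod n) - 1), ((n : ZMod n) - 1, 0),
        (1, (n : ZMod n) - 1), ((n : ZMod n) - 1, 1),
        (1, (n : ZMod n) - 2), ((n : ZMod n) - 2, 1)} : Set (ZMod n × ZMod n)),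
      ![-v.1, -v.2] ≠ tA.mulVec ![w.1, w.2] := by
  subst htA
  exact (stmt_15_general (ZMod n) n).2 (Or.inr (by omega))
end
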